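/- arXiv:2406.19709 — 6 statements merged into one kernel-verified Lean document; each statement's English description precedes it below -/
import Mathlib

section
/- Let G be a finite undirected unweighted graph, let F be a set of f edges of G, and let s and t be vertices. Then every shortest path from s to t in G∖F is f-decomposable: it can be written as a concatenation of at most f+1 subpaths, each of which is a shortest path in G between its own endpoints. -/
/-!
Suppose a shortest path `p` of `G ∖ F`, with vertices `v 0, …, v L`, is not `f`-decomposable.
Cutting `p` greedily produces positions `0 = b 0 < b 1 < ⋯ < b (f + 1) < L` such that the segment
of `p` from `v (b i)` to `v (b (i + 1) + 1)` (a maximal `G`-shortest piece plus one edge) is not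
shortest in `G`, for each of the `f + 1` indices `i ≤ f` (`exists_breaks`). Let `Q i` be a shortest
path of `G` between the ends of that segment; its length is at most `b (i + 1) - b i`, and it uses
an edge of `F`, as otherwise it would shorten `p` inside `G ∖ F`.

The `f + 1` vectors in `F → ZMod 2` recording the parities with which the `Q i` use the edges of
`F` are linearly dependent, so for some nonempty set `I` of indices the `Q i` with `i ∈ I` use
every edge of `F` an even number of times altogether (`exists_even_subset`). Add modulo `2` the
edges of `p` and, for `i ∈ I`, those of the `i`-th segment and of `Q i`. The resulting chain avoids
`F` and has boundary `s + t`, so its support contains a path from `s` to `t`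
(`dist_le_card_of_chain`).

The support has fewer than `L` edges: consecutive segments overlap in a single edge, so
each `i ∈ I` erases the `b (i + 1) - b i - 1` inner edges of its segment, and the first edge of the
first segment is erased as well (`card_odd_positions`); on the other hand, each `Q i` contributes
at most `b (i + 1) - b i - 1` edges outside `F`. Hence `p` was not shortest in `G ∖ F`. Discarding
the edges of `F` used by the `Q i` is what compensates for the overlaps.
-/

open SimpleGraph

/-- `IsDecomp G H f p` means that the walk `p` (a walk in the subgraph `H` of `G`) can be
written as a concatenation of at most `f + 1` subpaths, each of which is a shortest path
in `G` between its own endpoints (i.e. its length equals the `G`-distance of its endpoints). -/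
def IsDecomp {V : Type*} (G H : SimpleGraph V) : ℕ → ∀ {u v : V}, H.Walk u v → Prop
  | 0, u, v, p => p.length = G.dist u v
  | n + 1, u, v, p =>
      p.length = G.dist u v ∨
        ∃ (x : V) (q : H.Walk u x) (r : H.Walk x v),
          p = q.append r ∧ q.length = G.dist u x ∧ IsDecomp G H n r

/-- Greedy decomposition: a walk that is not `n`-decomposable has `n + 1` consecutive segments,
overlapping in one edge each, none of which is shortest in `G`. The sequence `b` is strictly
increasing on all of `ℕ` for convenience; only its values up to `n + 1` matter. -/
lemma exists_breaks {V : Type*} {G H : SimpleGraph V} (hle : H ≤ G) (n : ℕ) :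
    ∀ {u v : V} (p : H.Walk u v), ¬ IsDecomp G H n p →
      ∃ b : ℕ → ℕ, StrictMono b ∧ b 0 = 0 ∧ ∀ i ≤ n, b (i + 1) < p.length ∧
        G.dist (p.getVert (b i)) (p.getVert (b (i + 1) + 1)) ≤ b (i + 1) - b i := by
  classical
  -- The longest prefix all of whose own prefixes are shortest in `G`; it has at least one edge.
  have first : ∀ {u v : V} (p : H.Walk u v), p.length ≠ G.dist u v →
      ∃ k, 0 < k ∧ k < p.length ∧ G.dist u (p.getVert k) = k ∧
        G.dist u (p.getVert (k + 1)) ≤ k := by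
    intro u v p hne
    have hub : ∀ j, j ≤ p.length → G.dist u (p.getVert j) ≤ j := by
      intro j hj
      have h := G.dist_le ((p.take j).mapLe hle)
      simpa [Walk.take_length, hj] using h
    have hex : ∃ j, j ≤ p.length ∧ G.dist u (p.getVert j) < j := by
      refine ⟨p.length, le_rfl, ?_⟩
      have := hub p.length le_rfl
      rw [Walk.getVert_length] at this ⊢
      omega
    obtain ⟨h1, h2⟩ := Nat.find_spec hex
    have hmin : ∀ m, m < Nat.find hex → ¬ _ := fun m hm => Nat.find_min hex hm
    generalize Nat.find hex = N at h1 h2 hmin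
    obtain ⟨k, rfl⟩ : ∃ k, N = k + 1 := ⟨N - 1, by omega⟩
    have hk0 : 0 < k := by
      rcases Nat.eq_zero_or_pos k with rfl | h
      · have hadj := hle (p.adj_getVert_succ (i := 0) (by omega))
        rw [Walk.getVert_zero] at hadj
        rw [SimpleGraph.dist_eq_one_iff_adj.2 hadj] at h2
        omega
      · exact h
    refine ⟨k, hk0, by omega, ?_, by omega⟩
    have := hmin k (by omega)
    have := hub k (by omega)
    grind
  induction n with
  | zero =>
    intro u v p hp
    obtain ⟨k, hk0, hkl, -, hk⟩ := first p hp
    refine ⟨fun i => i * k, fun a b hab => Nat.mul_lt_mul_of_pos_right hab hk0, by simp, ?_⟩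
    intro i hi
    obtain rfl : i = 0 := by omega
    simpa using ⟨hkl, hk⟩
  | succ n ih =>
    intro u v p hp
    simp only [IsDecomp, not_or, not_exists, not_and] at hp
    obtain ⟨hp1, hp2⟩ := hp
    obtain ⟨k, hk0, hkl, hkd, hk⟩ := first p hp1
    have hr := hp2 _ (p.take k) (p.drop k) (p.append_take_drop_eq k).symm
      (by rw [Walk.take_length, hkd]; omega)
    obtain ⟨b, hb, hb0, hbi⟩ := ih _ hr
    refine ⟨fun i => Nat.casesOn i 0 (fun j => k + b j), ?_, rfl, ?_⟩
    · refine strictMono_nat_of_lt_succ fun i => ?_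
      cases i with
      | zero => exact Nat.add_pos_left hk0 _
      | succ i => have := hb (Nat.lt_add_one i); simp only; omega
    · intro i hi
      cases i with
      | zero => simpa [hb0] using ⟨hkl, hk⟩
      | succ i =>
        obtain ⟨h1, h2⟩ := hbi i (by omega)
        rw [Walk.drop_length] at h1
        rw [Walk.drop_getVert, Walk.drop_getVert] at h2
        refine ⟨by simp only; omega, ?_⟩
        simp only
        rw [show k + b (i + 1) - (k + b i) = b (i + 1) - b i by omega, add_assoc]
        exact h2

/-- More vectors over `ZMod 2` than coordinates: a nonempty subfamily sums to zero. -/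
lemma exists_even_subset {E : Type*} (F : Finset E) (x : Fin (F.card + 1) → E → ZMod 2) :
    ∃ I : Finset (Fin (F.card + 1)), I.Nonempty ∧ ∀ e ∈ F, ∑ i ∈ I, x i e = 0 := by
  classical
  have hdep : ¬ LinearIndependent (ZMod 2) (fun i (e : F) => x i e) := by
    intro h
    have := h.fintype_card_le_finrank
    simp at this
  obtain ⟨g, hg, i, hi⟩ := Fintype.not_linearIndependent_iff.1 hdep
  refine ⟨Finset.univ.filter fun i => g i = 1, ⟨i, ?_⟩, fun e he => ?_⟩
  · have : ∀ a : ZMod 2, a ≠ 0 → a = 1 := by decide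
    simpa using this _ hi
  · have h := congrFun hg ⟨e, he⟩
    simp only [Finset.sum_apply, Pi.smul_apply, Pi.zero_apply, smul_eq_mul] at h
    rw [Finset.sum_filter]
    refine Eq.trans (Finset.sum_congr rfl fun j _ => ?_) h
    have : ∀ a y : ZMod 2, (if a = 1 then y else 0) = a * y := by decide
    exact this _ _

/-- The coboundary modulo `2` of a vertex function. -/
def cobound {V : Type*} (c : V → ZMod 2) : Sym2 V → ZMod 2 :=
  Sym2.lift ⟨fun a b => c a + c b, fun _ _ => add_comm _ _⟩

lemma sum_edges_cobound {V : Type*} {G : SimpleGraph V} (c : V → ZMod 2) {u v : V}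
    (w : G.Walk u v) : (w.edges.map (cobound c)).sum = c u + c v := by
  induction w with
  | nil => simp [CharTwo.add_self_eq_zero]
  | @cons _ x _ h w ih =>
    simp only [Walk.edges_cons, List.map_cons, List.sum_cons, ih]
    simp only [cobound, Sym2.lift_mk]
    linear_combination CharTwo.add_self_eq_zero (c x)

lemma sum_count_mul {E : Type*} [Fintype E] [DecidableEq E] (l : List E) (φ : E → ZMod 2) :
    ∑ e, (l.count e : ZMod 2) * φ e = (l.map φ).sum := by
  rw [Finset.sum_list_map_count]
  simp only [nsmul_eq_mul]
  refine (Finset.sum_subset (Finset.subset_univ _) fun e _ he => ?_).symm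
  simp [List.count_eq_zero_of_not_mem (by simpa using he)]

/-- A chain modulo `2` supported in `D ⊆ E(H)` with boundary `s + t` (expressed by pairing with all
coboundaries) forces `s` and `t` to be joined by a path inside `D`. -/
lemma dist_le_card_of_chain {V : Type*} [Fintype V] [DecidableEq V] {H : SimpleGraph V} {s t : V}
    (N : Sym2 V → ZMod 2) (D : Finset (Sym2 V)) (hND : ∀ e, N e ≠ 0 → e ∈ D)
    (hD : ∀ e ∈ D, e ∈ H.edgeSet)
    (hN : ∀ c : V → ZMod 2, ∑ e, N e * cobound c e = c s + c t) :
    H.dist s t ≤ D.card := by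
  classical
  let K := fromEdgeSet (D : Set (Sym2 V))
  have hKH : K ≤ H := by
    intro a b hab
    have := hD _ (((fromEdgeSet_adj _).1 hab).1)
    simpa using this
  -- The indicator of the component of `s` has zero coboundary on `D`.
  let c : V → ZMod 2 := fun v => if K.Reachable s v then 1 else 0
  have hzero : ∑ e, N e * cobound c e = 0 := by
    refine Finset.sum_eq_zero fun e _ => ?_
    by_cases he : N e = 0
    · simp [he]
    have heD := hND e he
    induction e using Sym2.ind with
    | h a b =>
      have hadj : K.Adj a b := (fromEdgeSet_adj _).2
        ⟨heD, (show H.Adj a b from by simpa using hD _ heD).ne⟩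
      have hc : c a = c b := by
        have : K.Reachable s a ↔ K.Reachable s b :=
          ⟨fun h => h.trans hadj.reachable, fun h => h.trans hadj.symm.reachable⟩
        simp only [c, this]
      simp [cobound, hc, CharTwo.add_self_eq_zero]
  have hst : K.Reachable s t := by
    have h := (hN c).symm.trans hzero
    by_contra hcon
    simp [c, hcon] at h
  obtain ⟨w, hw⟩ := hst.exists_isPath
  calc H.dist s t ≤ (w.mapLe hKH).length := H.dist_le _
    _ = w.edges.toFinset.card := by
        rw [List.toFinset_card_of_nodup hw.isTrail.edges_nodup]; simp
    _ ≤ D.card := by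
        refine Finset.card_le_card fun e he => ?_
        have := w.edges_subset_edgeSet (List.mem_toFinset.1 he)
        rw [edgeSet_fromEdgeSet] at this
        exact this.1

/-- Position `j` stands for the `j`-th edge of the path, and the `i`-th segment occupies the
positions `b i, …, b (i + 1)`, both ends included. The positions surviving modulo `2` after adding
the segments of `I` to the whole path avoid all open intervals `(b i, b (i + 1))` and also the
first position of the first segment. -/
lemma card_odd_positions {m L : ℕ} {b : ℕ → ℕ} (hb : StrictMono b) (I : Finset (Fin m))
    (hI : I.Nonempty) (hL : ∀ i ∈ I, b (i + 1) < L) :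
    ((Finset.range L).filter fun j =>
      (1 + (I.filter fun i : Fin _ => b i ≤ j ∧ j ≤ b (i + 1)).card : ZMod 2) ≠ 0).card
      + ∑ i ∈ I, (b (i + 1) - b i - 1) + 1 ≤ L := by
  classical
  set J := (Finset.range L).filter fun j =>
      (1 + (I.filter fun i : Fin _ => b i ≤ j ∧ j ≤ b (i + 1)).card : ZMod 2) ≠ 0 with hJ
  let B := I.biUnion fun i => Finset.Ioo (b i) (b (i + 1))
  let i₀ := I.min' hI
  have hi₀ : i₀ ∈ I := I.min'_mem hI
  have hone : (1 + ((1 : ℕ) : ZMod 2)) = 0 := by decide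
  have hBcard : B.card = ∑ i ∈ I, (b (i + 1) - b i - 1) := by
    rw [Finset.card_biUnion]
    · simp
    · intro i _ j _ hij
      rw [Function.onFun, Finset.disjoint_left]
      intro x hx hx'
      rw [Finset.mem_Ioo] at hx hx'
      have h1 := hb.lt_iff_lt.1 (hx.1.trans hx'.2)
      have h2 := hb.lt_iff_lt.1 (hx'.1.trans hx.2)
      exact hij (Fin.ext (by omega))
  have hi₀B : b i₀ ∉ B := by
    simp only [B, Finset.mem_biUnion, Finset.mem_Ioo, not_exists, not_and]
    intro i _ h1 h2
    have h1 := hb.lt_iff_lt.1 h1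
    have h2 := hb.lt_iff_lt.1 h2
    omega
  have hBJ : insert (b i₀) B ⊆ Finset.range L \ J := by
    intro j hj
    -- Each such position lies in exactly one segment.
    suffices h : ∃ i ∈ I, j < L ∧ (I.filter fun i : Fin _ => b i ≤ j ∧ j ≤ b (i + 1)) = {i} by
      obtain ⟨i, -, hjL, h⟩ := h
      simp only [hJ, Finset.mem_sdiff, Finset.mem_filter, Finset.mem_range, h,
        Finset.card_singleton, hone]
      simp [hjL]
    rcases Finset.mem_insert.1 hj with rfl | hj
    · have hlt := hb (Nat.lt_add_one (i₀ : ℕ))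
      refine ⟨i₀, hi₀, hlt.trans (hL _ hi₀), ?_⟩
      ext i
      simp only [Finset.mem_filter, Finset.mem_singleton]
      refine ⟨fun ⟨hi, h, _⟩ => le_antisymm (hb.le_iff_le.1 h) (I.min'_le _ hi), ?_⟩
      rintro rfl
      exact ⟨hi₀, le_rfl, hlt.le⟩
    · simp only [B, Finset.mem_biUnion, Finset.mem_Ioo] at hj
      obtain ⟨i, hi, h1, h2⟩ := hj
      refine ⟨i, hi, h2.trans (hL _ hi), ?_⟩
      ext i'
      simp only [Finset.mem_filter, Finset.mem_singleton]
      constructor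
      · rintro ⟨-, h3, h4⟩
        have h5 := hb.lt_iff_lt.1 (h3.trans_lt h2)
        have h6 := hb.lt_iff_lt.1 (h1.trans_le h4)
        exact Fin.ext (by omega)
      · rintro rfl
        exact ⟨hi, h1.le, h2.le⟩
  have hJL : J ⊆ Finset.range L := Finset.filter_subset _ _
  have h1 := Finset.card_le_card hBJ
  rw [Finset.card_insert_of_notMem hi₀B, hBcard,
    Finset.card_sdiff_of_subset hJL, Finset.card_range] at h1
  have h2 : J.card ≤ L := by
    simpa using Finset.card_le_card hJL
  omega

lemma sum_Ico_telescope (c : ℕ → ZMod 2) {a b : ℕ} (hab : a ≤ b) :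
    ∑ j ∈ Finset.Ico a b, (c j + c (j + 1)) = c a + c b := by
  induction b, hab using Nat.le_induction with
  | base => simp [CharTwo.add_self_eq_zero]
  | succ n hn ih =>
    rw [Finset.sum_Ico_succ_top hn, ih]
    linear_combination CharTwo.add_self_eq_zero (c n)

/-- **Afek et al.**: for any set `F` of `f` failed edges of `G`, every shortest path from `s`
to `t` in `G ∖ F` is `f`-decomposable, i.e. it is the concatenation of at most `f + 1`
shortest paths of `G`. -/
theorem shortest_path_avoiding_is_f_decomposable
    {V : Type*} [Fintype V] [DecidableEq V] (G : SimpleGraph V)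
    (F : Finset (Sym2 V)) (hFG : (F : Set (Sym2 V)) ⊆ G.edgeSet) (f : ℕ) (hF : F.card = f)
    (s t : V) (p : (G.deleteEdges (F : Set (Sym2 V))).Walk s t)
    (hp : p.IsPath)
    (hshort : p.length = (G.deleteEdges (F : Set (Sym2 V))).dist s t) :
    IsDecomp G (G.deleteEdges (F : Set (Sym2 V))) f p := by
  classical
  subst hF
  let H := G.deleteEdges (F : Set (Sym2 V))
  have hle : H ≤ G := deleteEdges_le _
  replace hshort : p.length = H.dist s t := hshort
  by_contra hcon
  obtain ⟨b, hb, hb0, hbi⟩ := exists_breaks hle _ p hcon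
  have hQ : ∀ i : Fin (F.card + 1),
      ∃ Q : G.Walk (p.getVert (b i)) (p.getVert (b (i + 1) + 1)),
        Q.length ≤ b (i + 1) - b i := by
    intro i
    have hr : G.Reachable (p.getVert (b i)) (p.getVert (b (i + 1) + 1)) :=
      ⟨(((p.take _).reverse.append (p.take _)).mapLe hle)⟩
    obtain ⟨Q, hQ⟩ := hr.exists_walk_length_eq_dist
    exact ⟨Q, hQ.trans_le (hbi i (by omega)).2⟩
  choose Q hQlen using hQ
  have hQF : ∀ i, ∃ e ∈ (Q i).edges, e ∈ F := by
    intro i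
    by_contra! hno
    let Q' : H.Walk _ _ := (Q i).toDeleteEdges (F : Set (Sym2 V))
      (fun e he => by simpa using hno e he)
    have hQ' : Q'.length = (Q i).length := Walk.length_transfer ..
    have h := H.dist_le (((p.take (b i)).append Q').append (p.drop (b (i + 1) + 1)))
    have h1 := (hbi i (by omega)).1
    have h2 := hb (Nat.lt_add_one (i : ℕ))
    have h3 := hQlen i
    simp only [Walk.length_append, Walk.take_length, Walk.drop_length] at h
    omega
  obtain ⟨I, hI, hIF⟩ := exists_even_subset F (fun i e => ((Q i).edges.count e : ZMod 2))
  have hJ := card_odd_positions hb I hI (fun i _ => (hbi i (by omega)).1)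
  -- `m j` is the multiplicity of the `j`-th edge of `p` in the path plus the segments of `I`.
  let m : ℕ → ZMod 2 := fun j => 1 + (I.filter fun i : Fin _ => b i ≤ j ∧ j ≤ b (i + 1)).card
  let J := (Finset.range p.length).filter fun j => m j ≠ 0
  let ε : ℕ → Sym2 V := fun j => s(p.getVert j, p.getVert (j + 1))
  have hε : ∀ j < p.length, ε j ∈ H.edgeSet := fun j hj => p.adj_getVert_succ hj
  have hHF : ∀ e, e ∈ H.edgeSet ↔ e ∈ G.edgeSet ∧ e ∉ F := by
    intro e; simp [H, edgeSet_deleteEdges]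
  let N : Sym2 V → ZMod 2 := fun e =>
    ∑ j ∈ Finset.range p.length, (if ε j = e then m j else 0) +
      ∑ i ∈ I, ((Q i).edges.count e : ZMod 2)
  let R : Fin (F.card + 1) → Finset (Sym2 V) := fun i => (Q i).edges.toFinset \ F
  let D := J.image ε ∪ I.biUnion R
  have hND : ∀ e, N e ≠ 0 → e ∈ D := by
    intro e he
    by_cases h1 : ∃ j ∈ J, ε j = e
    · exact Finset.mem_union_left _ (Finset.mem_image.2 h1)
    have hz : ∑ j ∈ Finset.range p.length, (if ε j = e then m j else 0) = 0 := by
      refine Finset.sum_eq_zero fun j hj => ?_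
      split_ifs with h
      · by_contra hm
        exact h1 ⟨j, Finset.mem_filter.2 ⟨hj, hm⟩, h⟩
      · rfl
    simp only [N, hz, zero_add] at he
    have heF : e ∉ F := fun h => he (hIF e h)
    obtain ⟨i, hi, hc⟩ := Finset.exists_ne_zero_of_sum_ne_zero he
    refine Finset.mem_union_right _ (Finset.mem_biUnion.2 ⟨i, hi, ?_⟩)
    refine Finset.mem_sdiff.2 ⟨List.mem_toFinset.2 ?_, heF⟩
    by_contra hne
    exact hc (by simp [List.count_eq_zero_of_not_mem hne])
  have hDH : ∀ e ∈ D, e ∈ H.edgeSet := by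
    intro e he
    rcases Finset.mem_union.1 he with he | he
    · obtain ⟨j, hj, rfl⟩ := Finset.mem_image.1 he
      exact hε j (Finset.mem_range.1 (Finset.mem_filter.1 hj).1)
    · obtain ⟨i, -, he⟩ := Finset.mem_biUnion.1 he
      obtain ⟨h1, h2⟩ := Finset.mem_sdiff.1 he
      exact (hHF e).2 ⟨(Q i).edges_subset_edgeSet (List.mem_toFinset.1 h1), h2⟩
  have hN : ∀ c : V → ZMod 2, ∑ e, N e * cobound c e = c s + c t := by
    intro c
    have hQsum : ∑ e, (∑ i ∈ I, ((Q i).edges.count e : ZMod 2)) * cobound c e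
        = ∑ i ∈ I, (c (p.getVert (b i)) + c (p.getVert (b (i + 1) + 1))) := by
      simp_rw [Finset.sum_mul]
      rw [Finset.sum_comm]
      refine Finset.sum_congr rfl fun i _ => ?_
      rw [sum_count_mul, sum_edges_cobound]
    have hPsum : ∑ e, (∑ j ∈ Finset.range p.length, (if ε j = e then m j else 0)) * cobound c e
        = ∑ j ∈ Finset.range p.length, m j * (c (p.getVert j) + c (p.getVert (j + 1))) := by
      simp_rw [Finset.sum_mul]
      rw [Finset.sum_comm]
      refine Finset.sum_congr rfl fun j _ => ?_
      simp [ite_mul, ε, cobound]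
    have hm : ∑ j ∈ Finset.range p.length, m j * (c (p.getVert j) + c (p.getVert (j + 1)))
        = (c s + c t) + ∑ i ∈ I, (c (p.getVert (b i)) + c (p.getVert (b (i + 1) + 1))) := by
      simp only [m, add_mul, one_mul]
      rw [Finset.sum_add_distrib (s := Finset.range p.length)]
      congr 1
      · have := sum_Ico_telescope (fun j => c (p.getVert j)) (Nat.zero_le p.length)
        rw [← Finset.range_eq_Ico] at this
        refine Eq.trans this ?_
        simp
      · simp only [Finset.card_filter, Nat.cast_sum, Finset.sum_mul]
        rw [Finset.sum_comm]
        refine Finset.sum_congr rfl fun i _ => ?_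
        have h1 := (hbi i (by omega)).1
        have h2 := hb (Nat.lt_add_one (i : ℕ))
        rw [← sum_Ico_telescope (fun j => c (p.getVert j)) (a := b i) (b := b (i + 1) + 1)
          (by omega)]
        have hI : Finset.Ico (b i) (b (i + 1) + 1)
            = (Finset.range p.length).filter fun j => b i ≤ j ∧ j ≤ b (i + 1) := by
          ext j
          simp only [Finset.mem_Ico, Finset.mem_filter, Finset.mem_range]
          omega
        rw [hI, Finset.sum_filter]
        refine Finset.sum_congr rfl fun j _ => ?_
        split_ifs <;> simp
    simp only [N, add_mul, Finset.sum_add_distrib (s := (Finset.univ : Finset (Sym2 V)))]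
    rw [hPsum, hQsum, hm, add_assoc, CharTwo.add_self_eq_zero, add_zero]
  have hdist := dist_le_card_of_chain N D hND hDH hN
  have hR : ∀ i, (R i).card ≤ b (i + 1) - b i - 1 := by
    intro i
    obtain ⟨e, he, heF⟩ := hQF i
    have hss : R i ⊂ (Q i).edges.toFinset := by
      refine Finset.ssubset_iff_subset_ne.2 ⟨Finset.sdiff_subset, fun h => ?_⟩
      have := h.symm ▸ List.mem_toFinset.2 he
      exact (Finset.mem_sdiff.1 this).2 heF
    have h1 := Finset.card_lt_card hss
    have h2 := List.toFinset_card_le (Q i).edges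
    rw [Walk.length_edges] at h2
    have h3 := hQlen i
    omega
  have hDcard : D.card ≤ J.card + ∑ i ∈ I, (b (i + 1) - b i - 1) :=
    (Finset.card_union_le _ _).trans (add_le_add Finset.card_image_le
      (Finset.card_biUnion_le.trans (Finset.sum_le_sum fun i _ => hR i)))
  change J.card + _ + 1 ≤ p.length at hJ
  omega
end

section
/- Let G be a finite undirected graph with positive edge weights such that the shortest path between every pair of vertices is unique, and shortest paths remain unique in G∖{e₁}. Let e₁ = {a,b} lie on the unique shortest s–t path (the primary path) with a nearer to s, and let e₂ = {c,d} (e₂ ≠ e₁) lie on the unique shortest s–t path in G∖{e₁} (the secondary path) with c nearer to s; assume e₂ does not lie on the primary path. Let P be a shortest s–t path in G∖{e₁,e₂} whose detour starts on the primary path. Let x be a vertex of P such that the subpath P[s,x] is the unique shortest s–x path of G and contains no endpoint of e₁ or e₂ strictly in its interior. If x does not lie on the primary path st, then x is s-clean from {e₁,e₂}. -/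
/-!
Write `π(s, u)` for the unique shortest `s`–`u` path of `G`. Since `π(s, x)` is the intact prefix
`Q` of `P`, the point is to show that no fault endpoint has `x` on its shortest path from `s`.

For `a` and `b` this is immediate: `π(s, a)` and `π(s, b)` are prefixes of the primary path, which
misses `x` (`mem_support_of_inSubtree`).

Suppose `x ∈ π(s, y)` with `y ∈ {c, d}`. The path `π(s, y)` avoids `e₁`: the part up to `x` is a
prefix of `P`, and if `e₁` came after `x`, then `x` would lie on `π(s, a)`. Uniqueness in `G ∖ e₁`
therefore identifies `π(s, y)` with a prefix of the secondary path. As `P` avoids `e₂`, it follows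
that the secondary path is `s ⋯ x ⋯ c d ⋯ t` and agrees with `P` up to `x`.

* No vertex `z` of the segment from `x` to `c` is on the primary path. If `z` preceded `e₁` on it,
  uniqueness of the `s`–`z` path in `G ∖ e₁` would put `x` on the primary path; if `z` followed
  `e₁`, uniqueness of the `z`–`t` path would put `e₂` on it.
* `P` follows the secondary path up to `x`, so its detour starts after `x`, and from `x` to that
  start it uses only edges of the primary and secondary paths other than `e₂`. It can then never
  leave the segment from `x` to `c` (`mem_support_of_trapped`): primary edges do not touch the
  segment, and the only secondary edges leaving it are `e₂` and the edge back into `Q`. So the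
  detour does not start on the primary path, a contradiction.
-/

open SimpleGraph

namespace FaultyOracle

variable {V : Type*}

/-- The weight of a walk: the sum of the weights of its edges. -/
def wht (w : Sym2 V → ℝ) {G : SimpleGraph V} {u v : V} (p : G.Walk u v) : ℝ :=
  (p.edges.map w).sum

/-- A walk is a shortest path (w.r.t. the edge weights `w`): it is a path and its weight
is at most the weight of every walk with the same endpoints. -/
def IsShortest (w : Sym2 V → ℝ) {G : SimpleGraph V} {u v : V} (p : G.Walk u v) : Prop :=
  p.IsPath ∧ ∀ q : G.Walk u v, wht w p ≤ wht w q

/-- Shortest paths in `G` (w.r.t. `w`) are unique. -/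
def UniqueShortest (G : SimpleGraph V) (w : Sym2 V → ℝ) : Prop :=
  ∀ ⦃u v : V⦄ (p q : G.Walk u v), IsShortest w p → IsShortest w q → p = q

/-- `u` lies in the subtree `T_s(x)` of `x` in the shortest-path tree rooted at `s`:
some (= the unique) shortest `s`–`u` path passes through `x`. -/
def InSubtree (G : SimpleGraph V) (w : Sym2 V → ℝ) (s x u : V) : Prop :=
  ∃ p : G.Walk s u, IsShortest w p ∧ x ∈ p.support

/-- A walk is intact from a set `fends` of (fault-edge) endpoints: no vertex in `fends`
lies strictly between its endpoints. -/
def Intact {G : SimpleGraph V} {u v : V} (p : G.Walk u v) (fends : Set V) : Prop :=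
  ∀ y ∈ fends, y ∈ p.support → y = u ∨ y = v

/-- `x` is `s`-clean from the set of fault endpoints `fends`: the (unique) shortest
`s`–`x` path is intact from `fends`, and no vertex of `fends` lies in `T_s(x)`. -/
def SClean (G : SimpleGraph V) (w : Sym2 V → ℝ) (s x : V) (fends : Set V) : Prop :=
  (∀ p : G.Walk s x, IsShortest w p → Intact p fends) ∧
    ∀ y ∈ fends, ¬ InSubtree G w s x y

/-- The walk `p` traverses the edge `{a, b}` from `a` to `b` (so `a` is nearer to the
start of `p`). -/
def Traverses {G : SimpleGraph V} {u v : V} (p : G.Walk u v) (a b : V) : Prop :=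
  ∃ (q : G.Walk u a) (hab : G.Adj a b) (r : G.Walk b v), p = q.append (Walk.cons hab r)

/-- The detour of `P` (w.r.t. the primary path `Pst` and the secondary path `Psec`)
starts on the primary path: `P` has a prefix `Q`, all of whose edges lie on
`Pst ∪ Psec`, ending at a vertex `x` of the primary path, after which `P` immediately
deviates from `Pst ∪ Psec`. -/
def DetourStartsOnPrimary {G₁ G₂ H : SimpleGraph V} {s t : V} (P : H.Walk s t)
    (Pst : G₁.Walk s t) (Psec : G₂.Walk s t) : Prop :=
  ∃ (x : V) (Q : H.Walk s x) (R : H.Walk x t),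
    P = Q.append R ∧
    (∀ e ∈ Q.edges, e ∈ Pst.edges ∨ e ∈ Psec.edges) ∧
    x ∈ Pst.support ∧ ¬ R.Nil ∧
    (∀ e, R.edges.head? = some e → ¬(e ∈ Pst.edges ∨ e ∈ Psec.edges))

end FaultyOracle

open FaultyOracle

namespace FaultyOracle

variable {V : Type*} {w : Sym2 V → ℝ}

theorem wht_append {G : SimpleGraph V} {u v z : V} (p : G.Walk u v) (q : G.Walk v z) :
    wht w (p.append q) = wht w p + wht w q := by
  simp [wht, Walk.edges_append]

theorem IsShortest.left {G : SimpleGraph V} {u v z : V} {p : G.Walk u v} {q : G.Walk v z}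
    (h : IsShortest w (p.append q)) : IsShortest w p := by
  refine ⟨h.1.of_append_left, fun r => ?_⟩
  have := h.2 (r.append q)
  rw [wht_append, wht_append] at this
  linarith

theorem IsShortest.right {G : SimpleGraph V} {u v z : V} {p : G.Walk u v} {q : G.Walk v z}
    (h : IsShortest w (p.append q)) : IsShortest w q := by
  refine ⟨h.1.of_append_right, fun r => ?_⟩
  have := h.2 (p.append r)
  rw [wht_append, wht_append] at this
  linarith

/-- A shortest path of `G` avoiding the edge `e` is a shortest path of `G ∖ e`. -/
theorem IsShortest.exists_deleteEdges {G : SimpleGraph V} {u v : V} {p : G.Walk u v}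
    (h : IsShortest w p) {e : Sym2 V} (he : e ∉ p.edges) :
    ∃ p' : (G.deleteEdges {e}).Walk u v,
      IsShortest w p' ∧ p'.support = p.support ∧ p'.edges = p.edges := by
  have hp : ∀ f ∈ p.edges, f ∈ (G.deleteEdges {e}).edgeSet := by
    intro f hf
    rw [edgeSet_deleteEdges]
    exact ⟨p.edges_subset_edgeSet hf, fun h => he (h ▸ hf)⟩
  refine ⟨p.transfer _ hp, ⟨h.1.transfer hp, fun q => ?_⟩, by simp, by simp⟩
  have := h.2 (q.mapLe (deleteEdges_le _))
  simpa [wht] using this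

/-- Two prefixes of the same walk are comparable. -/
theorem append_eq_append {G : SimpleGraph V} {u v x y : V} (p : G.Walk u x) (q : G.Walk x v)
    (p' : G.Walk u y) (q' : G.Walk y v) (h : p.append q = p'.append q') :
    (∃ m : G.Walk x y, p' = p.append m ∧ q = m.append q') ∨
      ∃ m : G.Walk y x, p = p'.append m ∧ q' = m.append q := by
  induction p with
  | nil => exact .inl ⟨p', by simp, by simpa using h⟩
  | cons hadj p ih =>
    cases p' with
    | nil => exact .inr ⟨.cons hadj p, by simp, by simpa using h.symm⟩
    | cons hadj' p' =>
      simp only [Walk.cons_append, Walk.cons.injEq] at h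
      obtain ⟨rfl, h⟩ := h
      rcases ih q p' (eq_of_heq h) with ⟨m, rfl, h₂⟩ | ⟨m, rfl, h₂⟩
      · exact .inl ⟨m, by simp, h₂⟩
      · exact .inr ⟨m, by simp, h₂⟩

/-- A prefix of a shortest path is the shortest path to its endpoint, so every vertex having a
vertex of a shortest path from `s` in its subtree lies on that path. -/
theorem mem_support_of_inSubtree {G : SimpleGraph V} (husp : UniqueShortest G w) {s t x y : V}
    {p : G.Walk s t} (hp : IsShortest w p) (hy : y ∈ p.support) (h : InSubtree G w s x y) :
    x ∈ p.support := by
  obtain ⟨q, hq, hx⟩ := h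
  obtain ⟨q', r, rfl⟩ := Walk.mem_support_iff_exists_append.1 hy
  rw [husp q q' hq hp.left] at hx
  exact Walk.support_subset_support_append_left _ _ hx

/-- A walk starting in `S` whose edges cannot leave `S` ends in `S`. -/
theorem mem_support_of_trapped {G : SimpleGraph V} {u v : V} (m : G.Walk u v) (S : Set V)
    (hu : u ∈ S)
    (hstep : ∀ y z, s(y, z) ∈ m.edges → z ∈ m.support.tail → y ∈ S → z ∈ S) : v ∈ S := by
  induction m with
  | nil => exact hu
  | cons hadj m ih =>
    refine ih (hstep _ _ (by simp) (by simp) hu) fun y z he hz => hstep y z ?_ ?_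
    · simp [he]
    · simpa using List.mem_of_mem_tail hz

end FaultyOracle

/-- If `x` lies on the first segment of `P = st ⋄ {e₁, e₂}` (the subpath `P[s,x]` is the
unique shortest `s`–`x` path of `G`, intact from the fault endpoints), the detour of `P`
starts on the primary path, and `x` does not lie on the primary path `st`, then `x` is
`s`-clean from `{e₁, e₂}`. -/
theorem off_primary_first_segment_is_sClean
    {V : Type*} [Fintype V] [DecidableEq V] (G : SimpleGraph V) (w : Sym2 V → ℝ)
    (hw : ∀ e ∈ G.edgeSet, 0 < w e)
    (s t a b c d : V) (e₁ e₂ : Sym2 V)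
    (he₁ : e₁ = s(a, b)) (he₂ : e₂ = s(c, d)) (hne : e₂ ≠ e₁)
    (husp : UniqueShortest G w)
    (husp' : UniqueShortest (G.deleteEdges {e₁}) w)
    -- the primary path, containing `e₁` traversed from `a` (nearer `s`) to `b`
    (Pst : G.Walk s t) (hPst : IsShortest w Pst) (hab : Traverses Pst a b)
    (he₂prim : e₂ ∉ Pst.edges)
    -- the secondary path, containing `e₂` traversed from `c` (nearer `s`) to `d`
    (Psec : (G.deleteEdges {e₁}).Walk s t) (hPsec : IsShortest w Psec)
    (hcd : Traverses Psec c d)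
    -- `P = st ⋄ {e₁, e₂}`, whose detour starts on the primary path
    (P : (G.deleteEdges {e₁, e₂}).Walk s t) (hP : IsShortest w P)
    (hdet : DetourStartsOnPrimary P Pst Psec)
    -- `x` is a vertex of `P` whose prefix `P[s,x]` is the unique shortest `s`–`x` path
    -- of `G` and contains no fault endpoint strictly in its interior
    (x : V) (Q : (G.deleteEdges ({e₁, e₂} : Set (Sym2 V))).Walk s x)
    (R : (G.deleteEdges ({e₁, e₂} : Set (Sym2 V))).Walk x t)
    (hQR : P = Q.append R)
    (hQshort : IsShortest w (Q.mapLe (SimpleGraph.deleteEdges_le _)))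
    (hQintact : Intact Q ({a, b, c, d} : Set V))
    -- `x` does not lie on the primary path
    (hxoff : x ∉ Pst.support) :
    SClean G w s x ({a, b, c, d} : Set V) := by
  have hQ1 : e₁ ∉ Q.edges := fun h => by
    have := Q.edges_subset_edgeSet h
    simp [edgeSet_deleteEdges] at this
  have hQ2 : e₂ ∉ Q.edges := fun h => by
    have := Q.edges_subset_edgeSet h
    simp [edgeSet_deleteEdges] at this
  have hR2 : e₂ ∉ R.edges := fun h => by
    have := R.edges_subset_edgeSet h
    simp [edgeSet_deleteEdges] at this
  obtain ⟨p₁, hadj₁, p₂, hPsteq⟩ := hab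
  have haP : a ∈ Pst.support := by simp [hPsteq]
  have hbP : b ∈ Pst.support := by simp [hPsteq]
  -- `Q`, regarded as a shortest path of `G ∖ e₁`
  obtain ⟨Q', hQ's, -, hQ'edges⟩ := hQshort.exists_deleteEdges (e := e₁) (by simpa using hQ1)
  simp only [Walk.edges_mapLe_eq_edges] at hQ'edges
  -- a shortest path from `s` through `x` to a vertex of the secondary path follows that path
  have key : ∀ y (q : (G.deleteEdges {e₁}).Walk s y), IsShortest w q →
      InSubtree G w s x y → x ∈ q.support := by
    rintro y q hq ⟨p, hp, hx⟩
    have he : e₁ ∉ p.edges := by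
      intro he
      obtain ⟨q₁, q₂, rfl⟩ := Walk.mem_support_iff_exists_append.1 hx
      rw [Walk.edges_append, List.mem_append] at he
      rcases he with he | he
      · rw [husp q₁ _ hp.left hQshort] at he
        exact hQ1 (by simpa using he)
      · rw [he₁] at he
        obtain ⟨r₁, r₂, rfl⟩ := Walk.mem_support_iff_exists_append.1
          (Walk.fst_mem_support_of_mem_edges _ he)
        rw [Walk.append_assoc] at hp
        exact hxoff (mem_support_of_inSubtree husp hPst haP ⟨_, hp.left, by simp⟩)
    obtain ⟨p', hp', hsup, -⟩ := hp.exists_deleteEdges he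
    rw [← husp' p' q hp' hq, hsup]
    exact hx
  obtain ⟨q, hadj₂, D, hPseceq⟩ := hcd
  -- if `x` is on the secondary path before `e₂`, the detour cannot start on the primary path
  have main : x ∉ q.support := by
    intro hx
    obtain ⟨A, B, rfl⟩ := Walk.mem_support_iff_exists_append.1 hx
    rw [hPseceq] at hPsec
    have hA : A = Q' := husp' _ _ hPsec.left.left hQ's
    have hsecE : ∀ e, e ∈ Psec.edges ↔ (e ∈ Q.edges ∨ e ∈ B.edges) ∨ e = e₂ ∨ e ∈ D.edges := by
      intro e
      simp [hPseceq, hA, hQ'edges, he₂, Walk.edges_append, or_assoc]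
    have hoff : ∀ z ∈ B.support, z ∉ Pst.support := by
      intro z hzB hzP
      obtain ⟨B₁, B₂, rfl⟩ := Walk.mem_support_iff_exists_append.1 hzB
      subst hPsteq
      rw [Walk.mem_support_append_iff, Walk.support_cons, List.mem_cons] at hzP
      have hnd := hPst.1.isTrail.edges_nodup
      rw [Walk.edges_append, Walk.edges_cons] at hnd
      have hz : z ∈ p₁.support ∨ z ∈ p₂.support := by
        rcases hzP with h | rfl | h
        · exact .inl h
        · exact .inl (by simp)
        · exact .inr h
      rcases hz with hz | hz
      · obtain ⟨r₁, r₂, rfl⟩ := Walk.mem_support_iff_exists_append.1 hz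
        obtain ⟨r', hr', hsup, -⟩ := hPst.left.left.exists_deleteEdges (e := e₁) (by
          intro h
          rw [List.nodup_append] at hnd
          exact hnd.2.2 e₁ (by simp [Walk.edges_append, h]) e₁ (by simp [he₁]) rfl)
        have h1 := hPsec.left
        rw [Walk.append_assoc] at h1
        have := husp' _ _ hr' h1.left
        apply hxoff
        have hx' : x ∈ r₁.support := by rw [← hsup, this]; simp
        simp [hx']
      · obtain ⟨r₁, r₂, rfl⟩ := Walk.mem_support_iff_exists_append.1 hz
        have hsh : IsShortest w r₂ := by
          have := hPst.right
          rw [← Walk.cons_append] at this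
          exact this.right
        obtain ⟨r', hr', -, hE⟩ := hsh.exists_deleteEdges (e := e₁) (by
          intro h
          rw [List.nodup_append, List.nodup_cons] at hnd
          exact hnd.2.1.1 (by simp [Walk.edges_append, ← he₁, h]))
        have h1 := hPsec
        rw [← Walk.append_assoc, ← Walk.append_assoc] at h1
        have := husp' _ _ hr' h1.right.right
        apply he₂prim
        have : e₂ ∈ r₂.edges := by
          rw [← hE, this, he₂]; simp [Walk.edges_append]
        simp [Walk.edges_append, this]
    obtain ⟨y, Q₁, R₁, hPeq, hQ₁, hyP, hRnil, hhead⟩ := hdet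
    have hcmp := append_eq_append Q R Q₁ R₁ (hQR ▸ hPeq)
    rcases hcmp with ⟨M, rfl, rfl⟩ | ⟨M, rfl, rfl⟩
    · refine hoff y ?_ hyP
      refine mem_support_of_trapped M {z | z ∈ B.support} (by simp) ?_
      intro y' z he hz hy'
      simp only [Set.mem_ofPred_eq] at hy' ⊢
      rcases hQ₁ s(y', z) (by simp [Walk.edges_append, he]) with h | h
      · exact absurd (Walk.fst_mem_support_of_mem_edges _ h) (hoff _ hy')
      · rcases (hsecE _).1 h with (h | h) | h | h
        · -- an edge of `Q` would make `P` revisit a vertex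
          exfalso
          have hnd := hP.1.support_nodup
          rw [hQR, Walk.support_append, List.nodup_append] at hnd
          refine hnd.2.2 z (Walk.snd_mem_support_of_mem_edges _ h) z ?_ rfl
          rw [Walk.tail_support_append]
          exact List.mem_append_left _ hz
        · exact Walk.snd_mem_support_of_mem_edges _ h
        · exact absurd (h ▸ he) fun he => hR2 (by simp [Walk.edges_append, he])
        · -- an edge beyond `e₂` does not touch the segment, the secondary path being simple
          exfalso
          have hnd := hPsec.1.support_nodup
          rw [Walk.support_append, Walk.support_cons, List.tail_cons, List.nodup_append] at hnd
          exact hnd.2.2 y' (by simp [hy']) y' (Walk.fst_mem_support_of_mem_edges _ h) rfl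
    · cases M with
      | nil => exact hxoff hyP
      | cons hM M =>
        exact hhead _ (by simp; rfl)
          (.inr ((hsecE _).2 (.inl (.inl (by simp [Walk.edges_append])))))
  refine ⟨fun p hp y hy hyp => hQintact y hy ?_, ?_⟩
  · rw [husp p _ hp hQshort] at hyp
    simpa using hyp
  rintro y (rfl | rfl | rfl | rfl) hsub
  · exact hxoff (mem_support_of_inSubtree husp hPst haP hsub)
  · exact hxoff (mem_support_of_inSubtree husp hPst hbP hsub)
  · rw [hPseceq] at hPsec
    exact main (key _ q hPsec.left hsub)
  · rw [hPseceq, ← Walk.concat_append] at hPsec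
    have hx := key _ _ hPsec.left hsub
    rw [Walk.support_concat, List.mem_append, List.mem_singleton] at hx
    rcases hx with hx | rfl
    · exact main hx
    · -- `x = d` would put `e₂` on `Q`
      have := husp' _ _ hPsec.left hQ's
      exact hQ2 (by rw [← hQ'edges, ← this, he₂]; simp)
end

section
/- Let G be a finite undirected unweighted graph, F a set of edges, and P a shortest y–t path in G∖F. Let p be a vertex on P and a a vertex such that (i) d_{G∖F}(y,a) = d_G(y,a) (some shortest y–a path of G avoids all edges of F), and (ii) d_G(y,a) ≤ d_G(y,p). Then for every real 0 ≤ ε < 1 and every vertex z on the subpath P[p,t] with z ≠ p, one has d_{G∖F}(z,a) > ε·min(|P[p,z]|, |P[z,t]|). -/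
/-!
Write `H = G ∖ F`. Any walk from `z` to `a` in `H` has at least `|P[p,z]|` edges. Indeed
`d_H(y,a) = d_G(y,a) ≤ d_G(y,p) ≤ |P[y,p]|`, so following a shortest `y`–`a` walk of `H`, then the
given walk backwards from `a` to `z`, then `P[z,t]`, costs at most
`|P[y,p]| + d_H(z,a) + |P[z,t]|`; minimality of `P` forces `|P[p,z]| ≤ d_H(z,a)`. As `z ≠ p`, the
length `|P[p,z]|` is positive, and `ε < 1` makes the inequality strict.
-/


open SimpleGraph
open scoped ENNReal

/-- A walk is a shortest path in an unweighted graph: it is a path and its length is at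
most the length of every walk with the same endpoints. -/
def IsShortestN {V : Type*} {G : SimpleGraph V} {u v : V} (p : G.Walk u v) : Prop :=
  p.IsPath ∧ ∀ q : G.Walk u v, p.length ≤ q.length

/-- **The vertex `a` lies outside the trapezoid of every suffix `P[p,t]`** (Lemma 5 /
`claim:trap` of the paper): let `P` be a shortest `y`–`t` path in `G ∖ F`, let `a` satisfy
`d_{G∖F}(y,a) = d_G(y,a)` and `d_G(y,a) ≤ d_G(y,p)` for a vertex `p` of `P`.  Then for every
`0 ≤ ε < 1` and every vertex `z ≠ p` on the subpath `P[p,t]`,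
`d_{G∖F}(z,a) > ε · min(|P[p,z]|, |P[z,t]|)`. -/
theorem a_outside_trapezoid
    {V : Type*} [Fintype V] [DecidableEq V] (G : SimpleGraph V) (F : Set (Sym2 V))
    (y t : V) (P : (G.deleteEdges F).Walk y t) (hP : IsShortestN P)
    (p a : V) (hp : p ∈ P.support)
    (h1 : (G.deleteEdges F).edist y a = G.edist y a)
    (h2 : G.edist y a ≤ G.edist y p)
    (ε : ℝ) (hε0 : 0 ≤ ε) (hε1 : ε < 1) :
    ∀ (z : V) (P₁ : (G.deleteEdges F).Walk y p) (P₂ : (G.deleteEdges F).Walk p z)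
      (P₃ : (G.deleteEdges F).Walk z t),
      P = P₁.append (P₂.append P₃) → z ≠ p →
      ENNReal.ofReal (ε * min (P₂.length : ℝ) (P₃.length : ℝ)) <
        ((G.deleteEdges F).edist z a : ℝ≥0∞) := by
  intro z P₁ P₂ P₃ hP' hzp
  have hP₁ : (G.deleteEdges F).edist y a ≤ P₁.length :=
    calc (G.deleteEdges F).edist y a ≤ G.edist y p := h1.trans_le h2
      _ ≤ (G.deleteEdges F).edist y p := edist_anti (G.deleteEdges_le F)
      _ ≤ P₁.length := P₁.edist_le
  obtain ⟨Q, hQ⟩ := exists_walk_of_edist_ne_top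
    (ne_top_of_le_ne_top (ENat.natCast_ne_top P₁.length) hP₁)
  rw [← hQ, Nat.cast_le] at hP₁
  have hpos : 0 < P₂.length := by
    rw [Nat.pos_iff_ne_zero]
    exact fun h => hzp (Walk.eq_of_length_eq_zero h).symm
  have hdist : (P₂.length : ℕ∞) ≤ (G.deleteEdges F).edist z a := by
    refine le_iInf fun R => Nat.cast_le.2 ?_
    have h := hP.2 (Q.append (R.reverse.append P₃))
    simp only [hP', Walk.length_append, Walk.length_reverse] at h
    omega
  have hreal : ε * min (P₂.length : ℝ) (P₃.length : ℝ) < P₂.length := by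
    have hpos' : (0 : ℝ) < P₂.length := by exact_mod_cast hpos
    calc ε * min (P₂.length : ℝ) (P₃.length : ℝ) ≤ ε * P₂.length :=
          mul_le_mul_of_nonneg_left (min_le_left _ _) hε0
      _ < P₂.length := mul_lt_of_lt_one_left hpos' hε1
  calc ENNReal.ofReal (ε * min (P₂.length : ℝ) (P₃.length : ℝ)) < (P₂.length : ℝ≥0∞) := by
        rw [← ENNReal.ofReal_natCast]
        exact (ENNReal.ofReal_lt_ofReal_iff (by exact_mod_cast hpos)).2 hreal
    _ ≤ ((G.deleteEdges F).edist z a : ℝ≥0∞) := by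
        exact_mod_cast ENat.toENNReal_le.2 hdist
end

section
/- Let G be a finite undirected unweighted graph, F a set of edges, P a shortest p–t path in G∖F, and a a vertex with d_G(p,a) ≥ 2. Let z be a vertex on P such that the subpath P[p,z] is a shortest p–z path in G, z lies on a shortest p–a path in G (so that d_G(p,a) = d_G(p,z) + d_G(z,a)), and d_{G∖F}(z,a) ≤ d_G(z,a). Let ε > 0 and let i be the greatest integer with (1+ε)^i < d_G(p,a). If d_{G∖F}(z',a) > ε·|P[p,z']| holds for every vertex z' on P with z' ≠ p (in particular for z' = z), then d_G(p,z) ≤ (1+ε)^i. -/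
/-!
If `z = p` the distance is `0`. Otherwise the trapezoid hypothesis at `z` itself gives
`ε * d_G(p,z) ≤ ε * |P[p,z]| < d_{G∖F}(z,a) ≤ d_G(z,a)`; adding `d_G(p,z)` yields
`(1 + ε) * d_G(p,z) < d_G(p,a) ≤ (1 + ε) ^ (i + 1)`, and dividing by `1 + ε` gives the bound.
All distances involved are finite, since `d_G(p,a)` is bounded by a real number.
-/

open SimpleGraph
open scoped ENNReal

/-- **The LCA lemma** (`claim:LCA` of the paper): let `P` be a shortest `p`–`t` path in
`G ∖ F` and `a` a vertex with `d_G(p,a) ≥ 2`.  Let `z` be a vertex on `P` such that the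
subpath `P[p,z]` is a shortest `p`–`z` path of `G`, `z` lies on a shortest `p`–`a` path
of `G`, and `d_{G∖F}(z,a) ≤ d_G(z,a)`.  Let `ε > 0` and let `i` be the greatest integer
with `(1+ε)^i < d_G(p,a)`.  If `a` lies outside the trapezoid of `P` with parameter `ε`
(i.e. `d_{G∖F}(z',a) > ε·|P[p,z']|` for every vertex `z' ≠ p` on `P`), then
`d_G(p,z) ≤ (1+ε)^i`. -/
theorem lca_within_first_scale
    {V : Type*} [Fintype V] [DecidableEq V] (G : SimpleGraph V) (F : Set (Sym2 V))
    (p t : V) (P : (G.deleteEdges F).Walk p t) (hP : IsShortestN P)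
    (a : V) (ha : 2 ≤ G.edist p a)
    (z : V) (Q : (G.deleteEdges F).Walk p z) (R : (G.deleteEdges F).Walk z t)
    (hQR : P = Q.append R)
    (hQshort : IsShortestN (Q.mapLe (SimpleGraph.deleteEdges_le _)))
    (hza : G.edist p a = G.edist p z + G.edist z a)
    (hzF : (G.deleteEdges F).edist z a ≤ G.edist z a)
    (ε : ℝ) (hε : 0 < ε) (i : ℕ)
    (hi1 : ENNReal.ofReal ((1 + ε) ^ i) < (G.edist p a : ℝ≥0∞))
    (hi2 : (G.edist p a : ℝ≥0∞) ≤ ENNReal.ofReal ((1 + ε) ^ (i + 1)))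
    (htrap : ∀ (z' : V) (Q' : (G.deleteEdges F).Walk p z')
      (R' : (G.deleteEdges F).Walk z' t), P = Q'.append R' → z' ≠ p →
      ENNReal.ofReal (ε * (Q'.length : ℝ)) < ((G.deleteEdges F).edist z' a : ℝ≥0∞)) :
    (G.edist p z : ℝ≥0∞) ≤ ENNReal.ofReal ((1 + ε) ^ i) := by
  have hfin : G.edist p a ≠ ⊤ := by
    rintro h
    simp [h] at hi2
  obtain ⟨n, hn⟩ := ENat.ne_top_iff_exists.mp hfin
  have hpz : G.edist p z ≠ ⊤ := fun h => hfin (by rw [hza, h, top_add])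
  have hza' : G.edist z a ≠ ⊤ := fun h => hfin (by rw [hza, h, add_top])
  obtain ⟨k, hk⟩ := ENat.ne_top_iff_exists.mp hpz
  obtain ⟨m, hm⟩ := ENat.ne_top_iff_exists.mp hza'
  have hsum : n = k + m := by
    rw [← hn, ← hk, ← hm] at hza
    exact_mod_cast hza
  have hpos : (0 : ℝ) < 1 + ε := by linarith
  by_cases hzp : z = p
  · subst hzp
    simp
  -- The trapezoid hypothesis at `z` says that `z` is less than `m / ε` away from `p`.
  have hkm : ε * (k : ℝ) < m := by
    have hlen : k ≤ Q.length := by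
      have h := (Q.mapLe (SimpleGraph.deleteEdges_le (G := G) F)).edist_le
      rw [← hk] at h
      simpa using h
    have h1 : ENNReal.ofReal (ε * (Q.length : ℝ)) < ((m : ℕ∞) : ℝ≥0∞) := by
      refine (htrap z Q R hQR hzp).trans_le ?_
      rw [hm]
      exact_mod_cast hzF
    rw [ENat.toENNReal_coe, ← ENNReal.ofReal_natCast,
      ENNReal.ofReal_lt_ofReal_iff_of_nonneg (by positivity)] at h1
    have h2 : (k : ℝ) ≤ Q.length := by exact_mod_cast hlen
    exact (mul_le_mul_of_nonneg_left h2 hε.le).trans_lt h1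
  have hnp : (n : ℝ) ≤ (1 + ε) ^ (i + 1) := by
    rw [← hn, ENat.toENNReal_coe, ← ENNReal.ofReal_natCast,
      ENNReal.ofReal_le_ofReal_iff (by positivity)] at hi2
    exact hi2
  rw [← hk, ENat.toENNReal_coe, ← ENNReal.ofReal_natCast]
  apply ENNReal.ofReal_le_ofReal
  refine le_of_mul_le_mul_right ?_ hpos
  rw [← pow_succ]
  have : (n : ℝ) = k + m := by exact_mod_cast hsum
  linarith
end

section
/- Let G be a finite undirected graph with positive edge weights and unique shortest paths between all pairs of vertices. Let F = {e₁,e₂} be two edges, let P be a shortest s–t path in G∖F, and let p be a vertex on P such that the subpath P[s,p] is the unique shortest s–p path of G. Suppose p is s-clean from F and also s-clean from the single edge e* (that is, no endpoint of e₁, e₂, or e* lies strictly inside the unique shortest s–p path, and no endpoint of e₁, e₂, or e* lies in T_s(p)). Then no endpoint x ≠ s of e* satisfies both: x lies on P, and the subpath P[s,x] is the unique shortest s–x path of G. -/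
/-!
The prefixes `P[s,p]` and `P[s,x]` of the same walk `P` are comparable. If `P[s,p]` is the shorter
one, then `p` lies on the shortest path `P[s,x]`, so `x ∈ T_s(p)`; otherwise `x` lies on the
shortest path `P[s,p]`, hence strictly inside it or at `x = p ∈ T_s(p)`. Both contradict that `p`
is `s`-clean from the edge containing `x`.
-/

open SimpleGraph

open FaultyOracle

/-- **Clean vertices block the first segment** (Section 7 of the paper): let `P` be a
shortest `s`–`t` path in `G ∖ {e₁, e₂}` passing through a vertex `p` whose prefix `P[s,p]`
is the unique shortest `s`–`p` path of `G`.  If `p` is `s`-clean from `{e₁, e₂}` and also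
`s`-clean from the edge `eStar`, then no endpoint `x ≠ s` of `eStar` can lie on `P` with
`P[s,x]` being the unique shortest `s`–`x` path of `G`. -/
theorem clean_vertex_blocks_first_segment
    {V : Type*} [Fintype V] [DecidableEq V] (G : SimpleGraph V) (w : Sym2 V → ℝ)
    (hw : ∀ e ∈ G.edgeSet, 0 < w e)
    (husp : UniqueShortest G w)
    (s t : V) (e₁ e₂ eStar : Sym2 V)
    (P : (G.deleteEdges {e₁, e₂}).Walk s t) (hP : IsShortest w P)
    (p : V) (Qp : (G.deleteEdges ({e₁, e₂} : Set (Sym2 V))).Walk s p)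
    (Rp : (G.deleteEdges ({e₁, e₂} : Set (Sym2 V))).Walk p t)
    (hQRp : P = Qp.append Rp)
    (hQpshort : IsShortest w (Qp.mapLe (SimpleGraph.deleteEdges_le _)))
    (hcleanF : SClean G w s p {y : V | y ∈ e₁ ∨ y ∈ e₂})
    (hcleanStar : SClean G w s p {y : V | y ∈ eStar}) :
    ∀ x ∈ eStar, x ≠ s →
      ¬ ∃ (Q : (G.deleteEdges ({e₁, e₂} : Set (Sym2 V))).Walk s x)
          (R : (G.deleteEdges ({e₁, e₂} : Set (Sym2 V))).Walk x t),
          P = Q.append R ∧ IsShortest w (Q.mapLe (SimpleGraph.deleteEdges_le _)) := by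
  rintro x hx hxs ⟨Q, R, hP', hQ⟩
  have hsupp : Qp.support ++ Rp.support.tail = Q.support ++ R.support.tail := by
    rw [← Walk.support_append, ← Walk.support_append, ← hQRp, hP']
  rcases List.prefix_or_prefix_of_prefix (List.prefix_append Qp.support Rp.support.tail)
    (hsupp ▸ List.prefix_append Q.support R.support.tail) with h | h
  · refine hcleanStar.2 x hx ⟨_, hQ, ?_⟩
    rw [Walk.support_mapLe_eq_support]
    exact h.subset Qp.end_mem_support
  · rcases hcleanStar.1 _ hQpshort x hx (by
      rw [Walk.support_mapLe_eq_support]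
      exact h.subset Q.end_mem_support) with rfl | rfl
    · exact hxs rfl
    · exact hcleanStar.2 x hx ⟨_, hQpshort, Walk.end_mem_support _⟩
end

section
/- Let G be a finite undirected graph with positive edge weights and unique shortest paths between all pairs of vertices. Suppose both edges e₁ and e₂ lie on the unique shortest s–t path (the primary path). Let P be a shortest s–t path in G∖{e₁,e₂}, and let x be a vertex of P such that the unique shortest s–x path of G contains no endpoint of e₁ or e₂ strictly in its interior. If x does not lie on the primary path st, then x is s-clean from {e₁,e₂}: no endpoint of e₁ or e₂ lies in T_s(x). -/
/-!
A fault endpoint `y` lies on the primary path, and a prefix of a shortest path is shortest. Hence the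
unique shortest `s`–`y` path is the prefix of the primary path ending at `y`
(`IsShortest.takeUntil`). Were `y` in `T_s(x)`, this prefix would contain `x`, so `x` would lie on
the primary path. Intactness of the shortest `s`–`x` path is assumed.
-/

open SimpleGraph

open FaultyOracle

theorem FaultyOracle.wht_append_s12 {V : Type*} {G : SimpleGraph V} (w : Sym2 V → ℝ) {u v z : V}
    (p : G.Walk u v) (q : G.Walk v z) : wht w (p.append q) = wht w p + wht w q := by
  simp [wht, Walk.edges_append]

theorem FaultyOracle.IsShortest.takeUntil {V : Type*} [DecidableEq V] {G : SimpleGraph V}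
    {w : Sym2 V → ℝ} {u v y : V} {p : G.Walk u v} (hp : IsShortest w p) (hy : y ∈ p.support) :
    IsShortest w (p.takeUntil y hy) := by
  refine ⟨hp.1.takeUntil hy, fun q => ?_⟩
  have h := hp.2 (q.append (p.dropUntil y hy))
  have h' := wht_append_s12 w (p.takeUntil y hy) (p.dropUntil y hy)
  rw [p.take_spec hy] at h'
  rw [wht_append_s12] at h
  linarith

/-- (`claim:xsclean` of the paper): suppose both edges `e₁` and `e₂` lie on the unique
shortest `s`–`t` path (the primary path).  Let `P` be a shortest `s`–`t` path in
`G ∖ {e₁, e₂}` and let `x` be a vertex of `P` such that the unique shortest `s`–`x` path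
of `G` contains no endpoint of `e₁` or `e₂` strictly in its interior.  If `x` does not lie
on the primary path, then `x` is `s`-clean from `{e₁, e₂}`. -/
theorem off_primary_is_sClean_both_faults_on_primary
    {V : Type*} [Fintype V] [DecidableEq V] (G : SimpleGraph V) (w : Sym2 V → ℝ)
    (hw : ∀ e ∈ G.edgeSet, 0 < w e)
    (husp : UniqueShortest G w)
    (s t : V) (e₁ e₂ : Sym2 V) (hne : e₁ ≠ e₂)
    (Pst : G.Walk s t) (hPst : IsShortest w Pst)
    (he₁ : e₁ ∈ Pst.edges) (he₂ : e₂ ∈ Pst.edges)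
    (P : (G.deleteEdges {e₁, e₂}).Walk s t) (hP : IsShortest w P)
    (x : V) (hx : x ∈ P.support)
    (hintact : ∀ Q : G.Walk s x, IsShortest w Q →
      Intact Q {y : V | y ∈ e₁ ∨ y ∈ e₂})
    (hxoff : x ∉ Pst.support) :
    SClean G w s x {y : V | y ∈ e₁ ∨ y ∈ e₂} := by
  refine ⟨hintact, ?_⟩
  rintro y hy ⟨p, hp, hxp⟩
  have hyP : y ∈ Pst.support := by
    rcases hy with h | h
    · exact Walk.mem_support_of_mem_edges he₁ h
    · exact Walk.mem_support_of_mem_edges he₂ h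
  rw [husp p _ hp (hPst.takeUntil hyP)] at hxp
  exact hxoff (Pst.support_takeUntil_subset_support hyP hxp)
end
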